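/- arXiv:2102.00940 — 2 statements merged into one kernel-verified Lean document; each statement's English description precedes it below -/
import Mathlib

section
/- Let p and n_t be positive real numbers and define F : ℝ → ℝ by F(α) = (1 + α²·p/n_t) / ((1 − α)² + α²·(p + 1)/n_t). Set α⁻ = −(n_t + 1)/(2p) − sqrt(((n_t + 1)/(2p))² + n_t/p) and α⁺ = −(n_t + 1)/(2p) + sqrt(((n_t + 1)/(2p))² + n_t/p). Then: (i) α⁻ < 0 < α⁺; (ii) F is differentiable on ℝ and F′(α) = 0 if and only if α = α⁻ or α = α⁺; (iii) F attains its global minimum over ℝ at α⁻ and its global maximum over ℝ at α⁺. In particular the training learning rate minimizing the overparameterized MAML test loss is negative. -/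
/-!
For polynomials `P`, `Q` of degree at most two, Taylor expansion at `r` gives
`2 (P(x) Q(r) - P(r) Q(x)) = 2 W(r) (x - r) + W'(r) (x - r)²`, where `W = Q P' - Q' P` is the
Wronskian.  Hence a critical point `r` of `P / Q` is automatically a global extremum where `Q > 0`,
and the sign of `W'(r)` tells which kind.  For the MAML loss,
`W = -(2p / n_t) ((X + b)² - Δ)` with `b = (n_t + 1) / (2p)` and `Δ = b² + n_t / p`, so the critical
points are `-b ± √Δ`, and `W'` is positive at the smaller one and negative at the larger one.
-/

section PolynomialQuotient

open Polynomial

theorem two_mul_eval_eq_of_natDegree_le_two {R : Type*} [CommRing R] {P : R[X]}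
    (hP : P.natDegree ≤ 2) (x r : R) :
    2 * P.eval x = 2 * P.eval r + 2 * P.derivative.eval r * (x - r) +
      P.derivative.derivative.eval r * (x - r) ^ 2 := by
  rw [eq_quadratic_of_degree_le_two (natDegree_le_iff_degree_le.mp hP)]
  simp only [derivative_add, derivative_C_mul, derivative_X_sq, derivative_X, derivative_C,
    derivative_one, derivative_zero, eval_add, eval_mul, eval_pow, eval_C, eval_X, eval_one,
    eval_zero]
  ring

theorem derivative_wronskian {R : Type*} [CommRing R] (P Q : R[X]) :
    derivative (wronskian P Q) =
      P * derivative (derivative Q) - derivative (derivative P) * Q := by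
  simp only [wronskian, derivative_sub, derivative_mul]
  ring

theorem two_mul_eval_mul_eval_sub_of_natDegree_le_two {R : Type*} [CommRing R] {P Q : R[X]}
    (hP : P.natDegree ≤ 2) (hQ : Q.natDegree ≤ 2) (x r : R) :
    2 * (P.eval x * Q.eval r - P.eval r * Q.eval x) =
      2 * (wronskian Q P).eval r * (x - r) +
        (derivative (wronskian Q P)).eval r * (x - r) ^ 2 := by
  rw [derivative_wronskian]
  simp only [wronskian, eval_sub, eval_mul]
  linear_combination Q.eval r * two_mul_eval_eq_of_natDegree_le_two hP x r -
    P.eval r * two_mul_eval_eq_of_natDegree_le_two hQ x r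

theorem hasDerivAt_eval_div_eval {𝕜 : Type*} [NontriviallyNormedField 𝕜] (P : 𝕜[X]) {Q : 𝕜[X]}
    {x : 𝕜} (hx : Q.eval x ≠ 0) :
    HasDerivAt (fun y ↦ P.eval y / Q.eval y) ((wronskian Q P).eval x / Q.eval x ^ 2) x := by
  refine ((P.hasDerivAt x).fun_div (Q.hasDerivAt x) hx).congr_deriv ?_
  simp only [wronskian, eval_sub, eval_mul]
  ring

variable {K : Type*} [Field K] [LinearOrder K] [IsStrictOrderedRing K] {P Q : K[X]} {r : K}

theorem isMinOn_eval_div_eval_of_isRoot_wronskian (hP : P.natDegree ≤ 2) (hQ : Q.natDegree ≤ 2)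
    (hr : 0 < Q.eval r) (hW : (wronskian Q P).IsRoot r)
    (hW' : 0 ≤ (derivative (wronskian Q P)).eval r) :
    IsMinOn (fun x ↦ P.eval x / Q.eval x) {x | 0 < Q.eval x} r := by
  intro x (hx : 0 < Q.eval x)
  have hsub := two_mul_eval_mul_eval_sub_of_natDegree_le_two hP hQ x r
  rw [hW.eq_zero, mul_zero, zero_mul, zero_add] at hsub
  have hnonneg := mul_nonneg hW' (sq_nonneg (x - r))
  exact (div_le_div_iff₀ hr hx).mpr (by linarith)

theorem isMaxOn_eval_div_eval_of_isRoot_wronskian (hP : P.natDegree ≤ 2) (hQ : Q.natDegree ≤ 2)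
    (hr : 0 < Q.eval r) (hW : (wronskian Q P).IsRoot r)
    (hW' : (derivative (wronskian Q P)).eval r ≤ 0) :
    IsMaxOn (fun x ↦ P.eval x / Q.eval x) {x | 0 < Q.eval x} r := by
  have hmin := isMinOn_eval_div_eval_of_isRoot_wronskian (P := -P) (by rwa [natDegree_neg]) hQ hr
    (by simpa [wronskian_neg_right] using hW)
    (by simpa [wronskian_neg_right] using hW')
  simpa only [eval_neg, neg_div, neg_neg] using hmin.neg

end PolynomialQuotient

section CompletedSquare

theorem add_sq_eq_iff_eq_neg_sub_sqrt_or_eq_neg_add_sqrt {Δ : ℝ} (hΔ : 0 ≤ Δ) (x b : ℝ) :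
    (x + b) ^ 2 = Δ ↔ x = -b - √Δ ∨ x = -b + √Δ := by
  nth_rw 1 [← Real.sq_sqrt hΔ]
  rw [sq_eq_sq_iff_eq_or_eq_neg, or_comm]
  exact or_congr (by grind) (by grind)

variable {c : ℝ} (b : ℝ)

theorem neg_sub_sqrt_sq_add_neg (hc : 0 < c) : -b - √(b ^ 2 + c) < 0 := by
  have hb : -b < √(b ^ 2 + c) := Real.lt_sqrt_of_sq_lt (by linarith [neg_sq b])
  linarith

theorem neg_add_sqrt_sq_add_pos (hc : 0 < c) : 0 < -b + √(b ^ 2 + c) := by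
  have hb : b < √(b ^ 2 + c) := Real.lt_sqrt_of_sq_lt (by linarith)
  linarith

end CompletedSquare

section MAML

open Polynomial

variable {K : Type*} [Field K]

/-- The numerator `1 + α² p / n_t` of the rescaled MAML test loss, as a polynomial in the
training learning rate `α`. -/
noncomputable def mamlLossNum (p n : K) : K[X] :=
  1 + C (p / n) * X ^ 2

/-- The denominator `(1 - α)² + α² (p + 1) / n_t` of the rescaled MAML test loss, as a polynomial
in the training learning rate `α`. -/
noncomputable def mamlLossDen (p n : K) : K[X] :=
  (1 - X) ^ 2 + C ((p + 1) / n) * X ^ 2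

/-- The overparameterized average test loss of MAML as a function of the training learning rate,
up to a positive affine rescaling. -/
noncomputable def mamlLoss (p n α : K) : K :=
  (mamlLossNum p n).eval α / (mamlLossDen p n).eval α

theorem mamlLoss_apply (p n α : K) :
    mamlLoss p n α = (1 + α ^ 2 * p / n) / ((1 - α) ^ 2 + α ^ 2 * (p + 1) / n) := by
  simp only [mamlLoss, mamlLossNum, mamlLossDen, eval_add, eval_sub, eval_mul, eval_pow, eval_C,
    eval_X, eval_one]
  ring

theorem natDegree_mamlLossNum_le (p n : K) : (mamlLossNum p n).natDegree ≤ 2 := by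
  unfold mamlLossNum
  compute_degree

theorem natDegree_mamlLossDen_le (p n : K) : (mamlLossDen p n).natDegree ≤ 2 := by
  unfold mamlLossDen
  compute_degree

theorem eval_mamlLossDen_pos [LinearOrder K] [IsStrictOrderedRing K] {p n : K} (hp : -1 < p)
    (hn : 0 < n) (α : K) : 0 < (mamlLossDen p n).eval α := by
  have hp' : 0 < p + 1 := by linarith
  simp only [mamlLossDen, eval_add, eval_sub, eval_mul, eval_pow, eval_C, eval_X, eval_one]
  rcases eq_or_ne α 0 with rfl | hα
  · norm_num
  · positivity

theorem wronskian_mamlLossDen_mamlLossNum [CharZero K] {p n : K} (hp : p ≠ 0)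
    (hn : n ≠ 0) :
    wronskian (mamlLossDen p n) (mamlLossNum p n) =
      C (-(2 * p / n)) *
        ((X + C ((n + 1) / (2 * p))) ^ 2 - C (((n + 1) / (2 * p)) ^ 2 + n / p)) := by
  have hnum : derivative (mamlLossNum p n) = C (2 * (p / n)) * X := by
    simp only [mamlLossNum, derivative_add, derivative_one, derivative_C_mul, derivative_X_sq,
      C_mul]
    ring
  have hden : derivative (mamlLossDen p n) = C (2 * ((p + 1) / n)) * X - C 2 * (1 - X) := by
    simp only [mamlLossDen, derivative_add, derivative_sq, derivative_sub, derivative_one,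
      derivative_X, derivative_C_mul, C_mul]
    ring
  refine Polynomial.funext fun x ↦ ?_
  rw [wronskian, hnum, hden]
  simp only [mamlLossNum, mamlLossDen, eval_add, eval_sub, eval_mul, eval_pow, eval_C, eval_X,
    eval_one]
  field_simp
  ring

theorem eval_derivative_wronskian_mamlLossDen_mamlLossNum [CharZero K] {p n : K} (hp : p ≠ 0)
    (hn : n ≠ 0) (α : K) :
    (derivative (wronskian (mamlLossDen p n) (mamlLossNum p n))).eval α =
      -(4 * p / n) * (α + (n + 1) / (2 * p)) := by
  rw [wronskian_mamlLossDen_mamlLossNum hp hn]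
  simp only [derivative_C_mul, derivative_sub, derivative_sq, derivative_add, derivative_X,
    derivative_C, eval_mul, eval_sub, eval_add, eval_C, eval_X, eval_one, eval_zero]
  ring

/-- The critical training learning rate `α⁻` of the MAML loss, at which it is smallest. -/
noncomputable def mamlRateMinus (p n : ℝ) : ℝ :=
  -((n + 1) / (2 * p)) - √(((n + 1) / (2 * p)) ^ 2 + n / p)

/-- The critical training learning rate `α⁺` of the MAML loss, at which it is largest. -/
noncomputable def mamlRatePlus (p n : ℝ) : ℝ :=
  -((n + 1) / (2 * p)) + √(((n + 1) / (2 * p)) ^ 2 + n / p)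

variable {p n : ℝ}

theorem mamlRateMinus_neg (hp : 0 < p) (hn : 0 < n) : mamlRateMinus p n < 0 :=
  neg_sub_sqrt_sq_add_neg _ (div_pos hn hp)

theorem mamlRatePlus_pos (hp : 0 < p) (hn : 0 < n) : 0 < mamlRatePlus p n :=
  neg_add_sqrt_sq_add_pos _ (div_pos hn hp)

theorem isRoot_wronskian_mamlLossDen_mamlLossNum_iff (hp : 0 < p) (hn : 0 < n) (α : ℝ) :
    (wronskian (mamlLossDen p n) (mamlLossNum p n)).IsRoot α ↔
      α = mamlRateMinus p n ∨ α = mamlRatePlus p n := by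
  have hk : -(2 * p / n) ≠ 0 := neg_ne_zero.mpr (by positivity)
  rw [wronskian_mamlLossDen_mamlLossNum hp.ne' hn.ne', IsRoot.def, eval_mul, eval_C,
    mul_eq_zero_iff_left hk, eval_sub, eval_pow, eval_add, eval_X, eval_C, eval_C, sub_eq_zero]
  exact add_sq_eq_iff_eq_neg_sub_sqrt_or_eq_neg_add_sqrt (by positivity) _ _

theorem hasDerivAt_mamlLoss (hp : -1 < p) (hn : 0 < n) (α : ℝ) :
    HasDerivAt (mamlLoss p n)
      ((wronskian (mamlLossDen p n) (mamlLossNum p n)).eval α / (mamlLossDen p n).eval α ^ 2) α :=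
  hasDerivAt_eval_div_eval _ (eval_mamlLossDen_pos hp hn α).ne'

theorem deriv_mamlLoss_eq_zero_iff (hp : 0 < p) (hn : 0 < n) (α : ℝ) :
    deriv (mamlLoss p n) α = 0 ↔
      α = mamlRateMinus p n ∨ α = mamlRatePlus p n := by
  have hp' : -1 < p := by linarith
  have hden : (mamlLossDen p n).eval α ^ 2 ≠ 0 := pow_ne_zero 2 (eval_mamlLossDen_pos hp' hn α).ne'
  rw [(hasDerivAt_mamlLoss hp' hn α).deriv, div_eq_zero_iff, or_iff_left hden]
  exact isRoot_wronskian_mamlLossDen_mamlLossNum_iff hp hn α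

theorem mamlLoss_mamlRateMinus_le (hp : 0 < p) (hn : 0 < n) (α : ℝ) :
    mamlLoss p n (mamlRateMinus p n) ≤ mamlLoss p n α := by
  have hden (x : ℝ) : 0 < (mamlLossDen p n).eval x := eval_mamlLossDen_pos (by linarith) hn x
  refine isMinOn_eval_div_eval_of_isRoot_wronskian (natDegree_mamlLossNum_le p n)
    (natDegree_mamlLossDen_le p n) (hden _)
    ((isRoot_wronskian_mamlLossDen_mamlLossNum_iff hp hn _).mpr (Or.inl rfl)) ?_ (hden α)
  rw [eval_derivative_wronskian_mamlLossDen_mamlLossNum hp.ne' hn.ne',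
    mamlRateMinus, neg_mul, ← mul_neg, neg_add, neg_sub, sub_neg_eq_add, add_neg_cancel_right]
  positivity

theorem mamlLoss_le_mamlLoss_mamlRatePlus (hp : 0 < p) (hn : 0 < n) (α : ℝ) :
    mamlLoss p n α ≤ mamlLoss p n (mamlRatePlus p n) := by
  have hden (x : ℝ) : 0 < (mamlLossDen p n).eval x := eval_mamlLossDen_pos (by linarith) hn x
  refine isMaxOn_eval_div_eval_of_isRoot_wronskian (natDegree_mamlLossNum_le p n)
    (natDegree_mamlLossDen_le p n) (hden _)
    ((isRoot_wronskian_mamlLossDen_mamlLossNum_iff hp hn _).mpr (Or.inr rfl)) ?_ (hden α)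
  rw [eval_derivative_wronskian_mamlLossDen_mamlLossNum hp.ne' hn.ne',
    mamlRatePlus, neg_mul, neg_add_cancel_comm, neg_nonpos]
  positivity

end MAML

/-- For `p, n_t > 0`, the function
`F(α) = (1 + α² p/n_t) / ((1 − α)² + α² (p+1)/n_t)` satisfies: with
`α± = −(n_t+1)/(2p) ± √(((n_t+1)/(2p))² + n_t/p)` we have `α⁻ < 0 < α⁺`, `F` is
differentiable with `F'(α) = 0 ↔ α = α⁻ ∨ α = α⁺`, `F` attains its global minimum
at `α⁻` and its global maximum at `α⁺`.  In particular, the training learning rate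
minimizing the overparameterized MAML test loss is negative. -/
theorem stmt15 (p nt : ℝ) (hp : 0 < p) (hnt : 0 < nt)
    (F : ℝ → ℝ)
    (hF : ∀ α : ℝ, F α = (1 + α ^ 2 * p / nt) / ((1 - α) ^ 2 + α ^ 2 * (p + 1) / nt))
    (αminus αplus : ℝ)
    (hαminus : αminus = -((nt + 1) / (2 * p)) - Real.sqrt (((nt + 1) / (2 * p)) ^ 2 + nt / p))
    (hαplus : αplus = -((nt + 1) / (2 * p)) + Real.sqrt (((nt + 1) / (2 * p)) ^ 2 + nt / p)) :
    (αminus < 0 ∧ 0 < αplus) ∧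
    (∀ α : ℝ, DifferentiableAt ℝ F α) ∧
    (∀ α : ℝ, deriv F α = 0 ↔ α = αminus ∨ α = αplus) ∧
    (∀ α : ℝ, F αminus ≤ F α) ∧
    (∀ α : ℝ, F α ≤ F αplus) := by
  obtain rfl : F = mamlLoss p nt := funext fun α ↦ (hF α).trans (mamlLoss_apply p nt α).symm
  obtain rfl : αminus = mamlRateMinus p nt := hαminus
  obtain rfl : αplus = mamlRatePlus p nt := hαplus
  exact ⟨⟨mamlRateMinus_neg hp hnt, mamlRatePlus_pos hp hnt⟩,
    fun α ↦ (hasDerivAt_mamlLoss (by linarith) hnt α).differentiableAt,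
    deriv_mamlLoss_eq_zero_iff hp hnt,
    mamlLoss_mamlRateMinus_le hp hnt,
    mamlLoss_le_mamlLoss_mamlRatePlus hp hnt⟩
end

section
/- Fix positive integers p, n_t, n_v, n_r, m and reals σ, ν, α_r. Define h^r = (1 − α_r)² + α_r²·(p + 1)/n_r, h^t(α) = (1 − α)² + α²·(p + 1)/n_t, the moment ratios μ₂ = (n_t + p + 1)/n_t, μ₃ = (n_t² + p² + 3n_t p + 3n_t + 3p + 4)/n_t², μ₄ = (n_t³ + p³ + 6n_t²p + 6n_t p² + 6n_t² + 6p² + 17n_t p + 21n_t + 21p + 20)/n_t³, μ₁,₁ = (n_t²p + 2n_t)/(n_t²p), μ₂,₁ = (n_t²p + n_t p² + n_t p + 4n_t + 4p + 4)/(n_t²p), μ₂,₂ = (n_t³p + n_t p³ + 2n_t²p² + 2n_t²p + 2n_t p² + 8n_t² + 8p² + 21n_t p + 20n_t + 20p + 20)/(n_t³p), and the polynomials g₁(α) = 1 − 2αμ₂ + α²μ₃, g₂(α) = 1 − 2αμ₁,₁ + α²μ₂,₁, g₃(α) = 1 − 4α + 6α²μ₂ − 4α³μ₃ + α⁴μ₄,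 g₄(α) = 1 − 4α + 2α²μ₂ + 4α²μ₁,₁ − 4α³μ₂,₁ + α⁴μ₂,₂. Define L(α) = (σ²/2)(1 + α_r²p/n_r) + h^r·ν²/2 + (h^r/(2·h^t(α)²))·(p/(n_v·m))·( σ²·(h^t(α) + (α²/n_t)·((n_v + 1)·g₁(α) + p·g₂(α))) + (ν²/p)·((n_v + 1)·g₃(α) + p·g₄(α)) ). Then the derivative of L at α = 0 equals h^r·σ²·p/(n_v·m), which is nonnegative; in particular, if σ > 0 then L′(0) > 0, so the underparameterized test loss is strictly decreasing at α_t = 0 in the direction of negative training learning rates. -/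
/-! At a zero training rate `h^t` agrees with `(1 - α)²` up to `O(α²)`, and `g₃`, `g₄` agree with
`(1 - α)⁴`. Hence in `L` the noise term behaves like `σ² / h^t`, of slope `2σ²`, while the
task-variance term behaves like the constant `(1 - α)⁴ / (1 - α)⁴` and has slope zero. The moment
ratios only enter at second order. -/

section Calculus

variable {𝕜 F : Type*} [NontriviallyNormedField 𝕜] [NormedAddCommGroup F] [NormedSpace 𝕜 F]

lemma hasDerivAt_add_sub_sq_smul {f r : 𝕜 → F} {f' : F} {x : 𝕜}
    (hf : HasDerivAt f f' x) (hr : ContinuousAt r x) :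
    HasDerivAt (fun y => f y + (y - x) ^ 2 • r y) f' x := by
  have hsq : (fun y => (y - x) ^ 2) =o[nhds x] fun y => y - x :=
    Asymptotics.isLittleO_norm_left.mp <| by
      simpa only [norm_pow] using Asymptotics.isLittleO_pow_sub_sub x one_lt_two
  have hrem : HasDerivAt (fun y => (y - x) ^ 2 • r y) 0 x :=
    hasDerivAt_iff_isLittleO.mpr (by simpa using hsq.smul_isBigO (hr.isBigO_one 𝕜))
  simpa using hf.fun_add hrem

lemma hasDerivAt_at_zero_of_eq_add_sq_smul {f q : 𝕜 → F} {a b : F} (hq : ContinuousAt q 0)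
    (hf : ∀ x, f x = a + x • b + x ^ 2 • q x) : HasDerivAt f b 0 := by
  have hline : HasDerivAt (fun x : 𝕜 => a + x • b) b 0 := by
    simpa using ((hasDerivAt_id (0 : 𝕜)).smul_const b).const_add a
  simpa [← hf] using hasDerivAt_add_sub_sq_smul hline hq

-- `u / h ^ 2` behaves like `1 / h`, and `hbal` says that `w / h ^ 2` is stationary at `x`.
lemma hasDerivAt_add_div_sq_of_balanced {h u w : 𝕜 → 𝕜} {h' w' x : 𝕜} (s c : 𝕜)
    (hh : HasDerivAt h h' x) (hx : h x ≠ 0) (hu : HasDerivAt u h' x) (hux : u x = h x)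
    (hw : HasDerivAt w w' x) (hbal : w' * h x = 2 * w x * h') :
    HasDerivAt (fun y => (s * u y + c * w y) / h y ^ 2) (-(s * h') / h x ^ 2) x := by
  have hnum := (hu.const_mul s).fun_add (hw.const_mul c)
  have hquot := hnum.fun_div (hh.fun_pow 2) (pow_ne_zero 2 hx)
  refine hquot.congr_deriv ?_
  simp only [hux]
  field_simp
  push_cast
  linear_combination c * h x * hbal

end Calculus

/-- The factor `𝔼 ‖(1 - α XᵀX / n) w‖² / ‖w‖²` by which a gradient step of rate `α` on `n` samples
scales squared errors, for a standard Gaussian `n × p` design `X`. It is `h^r` at `α = α_r`,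
`n = n_r`, and `h^t` at `n = n_t`. -/
noncomputable def gradStepFactor (p n α : ℝ) : ℝ := (1 - α) ^ 2 + α ^ 2 * (p + 1) / n

lemma gradStepFactor_zero (p n : ℝ) : gradStepFactor p n 0 = 1 := by
  simp [gradStepFactor]

lemma gradStepFactor_pos {p n : ℝ} (hp : -1 < p) (hn : 0 < n) (α : ℝ) :
    0 < gradStepFactor p n α := by
  have hp1 : 0 < p + 1 := by linarith
  rcases eq_or_ne α 0 with rfl | hα
  · simp [gradStepFactor_zero]
  · unfold gradStepFactor
    positivity

lemma hasDerivAt_gradStepFactor_zero (p n : ℝ) : HasDerivAt (gradStepFactor p n) (-2) 0 :=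
  hasDerivAt_at_zero_of_eq_add_sq_smul (a := 1) (q := fun _ => 1 + (p + 1) / n) continuousAt_const
    fun α => by simp only [gradStepFactor, smul_eq_mul]; ring

lemma hasDerivAt_div_gradStepFactor_sq_zero {r w : ℝ → ℝ} (p n s c : ℝ)
    (hr : ContinuousAt r 0) (hw : HasDerivAt w (-4 * w 0) 0) :
    HasDerivAt (fun α => (s * (gradStepFactor p n α + α ^ 2 * r α) + c * w α) /
      gradStepFactor p n α ^ 2) (2 * s) 0 := by
  have hh := hasDerivAt_gradStepFactor_zero p n
  have hu : HasDerivAt (fun α => gradStepFactor p n α + α ^ 2 * r α) (-2) 0 := by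
    simpa using hasDerivAt_add_sub_sq_smul hh hr
  refine (hasDerivAt_add_div_sq_of_balanced s c hh (by simp [gradStepFactor_zero]) hu (by simp)
    hw ?_).congr_deriv ?_
  · rw [gradStepFactor_zero]; ring
  · rw [gradStepFactor_zero]; ring

/-- The derivative at `α_t = 0` of the underparameterized MAML test loss
(Theorem 2 of the paper), as a function of the inner-loop training learning rate,
equals `h^r σ² p / (n_v m) ≥ 0`; in particular it is strictly positive when `σ > 0`,
so the loss is strictly decreasing at `0` in the direction of negative learning
rates. -/
theorem stmt16 (p nt nv nr m : ℕ) (hp : 0 < p) (hnt : 0 < nt) (hnv : 0 < nv)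
    (hnr : 0 < nr) (hm : 0 < m)
    (σ ν αr : ℝ)
    (hr : ℝ) (hhr : hr = (1 - αr) ^ 2 + αr ^ 2 * (p + 1) / nr)
    (ht : ℝ → ℝ) (hht : ∀ α : ℝ, ht α = (1 - α) ^ 2 + α ^ 2 * (p + 1) / nt)
    (μ2 μ3 μ4 μ11 μ21 μ22 : ℝ)
    (hμ2 : μ2 = (nt + p + 1) / nt)
    (hμ3 : μ3 = (nt ^ 2 + p ^ 2 + 3 * nt * p + 3 * nt + 3 * p + 4) / nt ^ 2)
    (hμ4 : μ4 = (nt ^ 3 + p ^ 3 + 6 * nt ^ 2 * p + 6 * nt * p ^ 2 + 6 * nt ^ 2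
      + 6 * p ^ 2 + 17 * nt * p + 21 * nt + 21 * p + 20) / nt ^ 3)
    (hμ11 : μ11 = (nt ^ 2 * p + 2 * nt) / (nt ^ 2 * p))
    (hμ21 : μ21 = (nt ^ 2 * p + nt * p ^ 2 + nt * p + 4 * nt + 4 * p + 4) / (nt ^ 2 * p))
    (hμ22 : μ22 = (nt ^ 3 * p + nt * p ^ 3 + 2 * nt ^ 2 * p ^ 2 + 2 * nt ^ 2 * p
      + 2 * nt * p ^ 2 + 8 * nt ^ 2 + 8 * p ^ 2 + 21 * nt * p + 20 * nt + 20 * p + 20)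
      / (nt ^ 3 * p))
    (g1 g2 g3 g4 : ℝ → ℝ)
    (hg1 : ∀ α : ℝ, g1 α = 1 - 2 * α * μ2 + α ^ 2 * μ3)
    (hg2 : ∀ α : ℝ, g2 α = 1 - 2 * α * μ11 + α ^ 2 * μ21)
    (hg3 : ∀ α : ℝ, g3 α = 1 - 4 * α + 6 * α ^ 2 * μ2 - 4 * α ^ 3 * μ3 + α ^ 4 * μ4)
    (hg4 : ∀ α : ℝ, g4 α = 1 - 4 * α + 2 * α ^ 2 * μ2 + 4 * α ^ 2 * μ11
      - 4 * α ^ 3 * μ21 + α ^ 4 * μ22)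
    (L : ℝ → ℝ)
    (hL : ∀ α : ℝ, L α = σ ^ 2 / 2 * (1 + αr ^ 2 * p / nr) + hr * ν ^ 2 / 2
      + hr / (2 * ht α ^ 2) * (p / (nv * m)) *
        (σ ^ 2 * (ht α + α ^ 2 / nt * ((nv + 1) * g1 α + p * g2 α))
          + ν ^ 2 / p * ((nv + 1) * g3 α + p * g4 α))) :
    deriv L 0 = hr * σ ^ 2 * p / (nv * m) ∧
    0 ≤ deriv L 0 ∧
    (0 < σ → 0 < deriv L 0) := by
  obtain rfl : ht = gradStepFactor p nt := funext hht
  have hr_pos : 0 < hr :=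
    hhr ▸ gradStepFactor_pos (neg_one_lt_zero.trans_le p.cast_nonneg) (Nat.cast_pos.mpr hnr) αr
  have hg3' : HasDerivAt g3 (-4) 0 :=
    hasDerivAt_at_zero_of_eq_add_sq_smul (a := 1) (q := fun α => 6 * μ2 - 4 * α * μ3 + α ^ 2 * μ4)
      (by fun_prop) fun α => by simp only [hg3, smul_eq_mul]; ring
  have hg4' : HasDerivAt g4 (-4) 0 :=
    hasDerivAt_at_zero_of_eq_add_sq_smul (a := 1)
      (q := fun α => 2 * μ2 + 4 * μ11 - 4 * α * μ21 + α ^ 2 * μ22)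
      (by fun_prop) fun α => by simp only [hg4, smul_eq_mul]; ring
  have hw : HasDerivAt (fun α => (nv + 1) * g3 α + p * g4 α)
      (-4 * ((nv + 1) * g3 0 + p * g4 0)) 0 :=
    ((hg3'.const_mul _).fun_add (hg4'.const_mul _)).congr_deriv (by rw [hg3, hg4]; ring)
  have hr_cont : ContinuousAt (fun α => ((nv + 1) * g1 α + p * g2 α) / nt) 0 := by
    simp only [hg1, hg2]; fun_prop
  have hL' : HasDerivAt L (hr * σ ^ 2 * p / (nv * m)) 0 := by
    have hloss := hasDerivAt_div_gradStepFactor_sq_zero p nt (σ ^ 2) (ν ^ 2 / p) hr_cont hw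
    refine (((hloss.const_mul (hr / 2 * (p / (nv * m)))).const_add
      (σ ^ 2 / 2 * (1 + αr ^ 2 * p / nr) + hr * ν ^ 2 / 2)).congr_of_eventuallyEq
        (.of_forall fun α => ?_)).congr_deriv (by ring)
    rw [hL]; ring
  rw [hL'.deriv]
  exact ⟨rfl, by positivity, fun hσ => by positivity⟩
end
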